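/- Let d ≥ 2 be a natural number and let f : ℝ^d → ℂ be a continuous function. Let R_f be the ℂ-linear span of the set of functions {x ↦ f(L x) : L is a surjective isometry of ℝ^d}. Then f is an ordinary polynomial if and only if R_f is a finite-dimensional ℂ-vector space. -/

import Mathlib

/-!
If `f` is a polynomial, it lies in some power of the finite-dimensional space of affine functions.
Since isometries are affine (Mazur–Ulam), that power contains the whole span `R_f`.

Conversely, let `R_f` be finite dimensional, so that it contains a common eigenvector of the
translations; its eigenvalues form a continuous character `χ`. For every linear isometry `A`,
`χ ∘ A` is again such a character, and all their values at a given vector are eigenvalues of one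
translation. Hence `χ` takes finitely many values on each sphere, and is constant there because
spheres are connected in dimension at least two. From `χ (u / 2) = χ (-u / 2)` we get `χ u = 1`.
So the translations act unipotently on `R_f`, and the iterated differences `Δ_h^N f` vanish for
`N = dim R_f`. By Newton's formula such an `f` is a polynomial along rational points of each line,
by continuity along each line, and by interpolation one coordinate at a time it is a polynomial.
-/

open Module (finrank)
open Polynomial
open scoped fwdDiff

section LinearAlgebra

variable {ι K M : Type*} [Field K] [IsAlgClosed K] [AddCommGroup M] [Module K M]

theorem sub_smul_pow_finrank_eq_zero_of_forall_hasEigenvalue [FiniteDimensional K M]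
    {f : Module.End K M} {μ : K} (hf : ∀ ν, f.HasEigenvalue ν → ν = μ) :
    (f - μ • 1) ^ finrank K M = 0 := by
  have maxGen_le (ν : K) : f.maxGenEigenspace ν ≤ f.genEigenspace μ (finrank K M) := by
    by_cases hν : f.HasEigenvalue ν
    · rw [hf ν hν]
      exact (f.maxGenEigenspace_eq_genEigenspace_finrank μ).le
    · have hbot : f.maxGenEigenspace ν = ⊥ := by
        by_contra hne
        exact hν (Module.End.HasUnifEigenvalue.lt (k := ⊤) one_pos hne)
      exact hbot ▸ bot_le
  rw [← LinearMap.ker_eq_top, ← Module.End.genEigenspace_nat, eq_top_iff,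
    ← Module.End.iSup_maxGenEigenspace_eq_top f]
  exact iSup_le maxGen_le

theorem inf_eigenspace_ne_bot_of_hasEigenvalue_restrict {R : Type*} [CommRing R] [Module R M]
    {f : Module.End R M} {W : Submodule R M} {hW : Set.MapsTo f W W} {μ : R}
    (hμ : Module.End.HasEigenvalue (f.restrict hW) μ) : W ⊓ f.eigenspace μ ≠ ⊥ := by
  obtain ⟨w, hw⟩ := hμ.exists_hasEigenvector
  exact (Submodule.ne_bot_iff _).2
    ⟨w, ⟨w.2, Module.End.mem_eigenspace_iff.2 (congrArg Subtype.val hw.apply_eq_smul)⟩,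
      fun h0 => hw.2 (Subtype.ext h0)⟩

theorem exists_common_eigenvector {f : ι → Module.End K M} (hf : ∀ i j, Commute (f i) (f j))
    {W : Submodule K M} [FiniteDimensional K W] (hW : W ≠ ⊥)
    (hinv : ∀ i, Set.MapsTo (f i) W W) :
    ∃ v ∈ W, v ≠ 0 ∧ ∃ χ : ι → K, ∀ i, f i v = χ i • v := by
  induction hn : finrank K W using Nat.strong_induction_on generalizing W with
  | h n ih =>
    by_cases hscalar : ∀ i, ∃ c : K, W ≤ (f i).eigenspace c
    · choose χ hχ using hscalar
      obtain ⟨v, hv, hv0⟩ := W.ne_bot_iff.1 hW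
      exact ⟨v, hv, hv0, χ, fun i => Module.End.mem_eigenspace_iff.1 (hχ i hv)⟩
    · push Not at hscalar
      obtain ⟨i, hi⟩ := hscalar
      have : Nontrivial W := Submodule.nontrivial_iff_ne_bot.2 hW
      obtain ⟨c, hc⟩ := Module.End.exists_eigenvalue ((f i).restrict (hinv i))
      have hlt : W ⊓ (f i).eigenspace c < W := inf_lt_left.2 (hi c)
      have : FiniteDimensional K (W ⊓ (f i).eigenspace c : Submodule K M) :=
        Submodule.finiteDimensional_of_le inf_le_left
      obtain ⟨v, hv, hv'⟩ := ih _ (hn ▸ Submodule.finrank_lt_finrank_of_lt hlt)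
        (inf_eigenspace_ne_bot_of_hasEigenvalue_restrict hc)
        (fun j => (hinv j).inter_inter (Module.End.mapsTo_genEigenspace_of_comm (hf i j) c 1)) rfl
      exact ⟨v, hv.1, hv'⟩

end LinearAlgebra

section FwdDiff

theorem fwdDiff_iter_comp_add_map {M M' G : Type*} [AddCommMonoid M] [AddCommMonoid M']
    [AddCommGroup G] (f : M' → G) (φ : M →+ M') (x : M') (h : M) (n : ℕ) :
    (Δ_[h])^[n] (fun y => f (x + φ y)) = fun y => (Δ_[φ h])^[n] f (x + φ y) := by
  ext y
  simp only [fwdDiff_iter_eq_sum_shift, map_add, map_nsmul, add_assoc]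

variable {N : ℕ}

theorem exists_polynomial_apply_add_nsmul_eq {M K : Type*} [AddCommMonoid M] [Field K] [CharZero K]
    {f : M → K} {h : M} (hf : (Δ_[h])^[N] f = 0) (x : M) :
    ∃ p : K[X], p.degree < N ∧ ∀ n : ℕ, f (x + n • h) = p.eval (n : K) := by
  have vanish : ∀ k, N ≤ k → (Δ_[h])^[k] f = 0 := by
    intro k hk
    obtain ⟨m, rfl⟩ := Nat.exists_eq_add_of_le' hk
    rw [Function.iterate_add_apply, hf]
    exact Function.iterate_fixed (fwdDiff_const h (0 : K)) m
  refine ⟨∑ k ∈ Finset.range N, ((Δ_[h])^[k] f x / k.factorial) • descPochhammer K k,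
    ?_, fun n => ?_⟩
  · rw [← mem_degreeLT]
    refine Submodule.sum_mem _ fun k hk => mem_degreeLT.2 ?_
    refine (degree_smul_le _ _).trans_lt ?_
    rw [degree_eq_natDegree (monic_descPochhammer K k).ne_zero, descPochhammer_natDegree]
    exact_mod_cast Finset.mem_range.1 hk
  · have newton : f (x + n • h) = ∑ k ∈ Finset.range N, n.choose k • (Δ_[h])^[k] f x := by
      rw [shift_eq_sum_fwdDiff_iter h f n x]
      rcases le_total (n + 1) N with hnN | hNn
      · refine Finset.sum_subset (Finset.range_mono hnN) fun k _ hk => ?_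
        rw [Nat.choose_eq_zero_of_lt (by simpa using hk), zero_smul]
      · refine (Finset.sum_subset (Finset.range_mono hNn) fun k _ hk => ?_).symm
        rw [vanish k (by simpa using hk), Pi.zero_apply, smul_zero]
    rw [newton, eval_finsetSum]
    refine Finset.sum_congr rfl fun k _ => ?_
    have := Nat.cast_ne_zero (R := K).2 k.factorial_ne_zero
    rw [eval_smul, descPochhammer_eval_eq_descFactorial, Nat.descFactorial_eq_factorial_mul_choose,
      Nat.cast_mul, smul_eq_mul, nsmul_eq_mul]
    field

theorem exists_polynomial_apply_ratCast_eq {K : Type*} [Field K] [CharZero K] {f : ℚ → K}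
    (hf : ∀ h, (Δ_[h])^[N] f = 0) :
    ∃ p : K[X], p.degree < N ∧ ∀ r : ℚ, f r = p.eval (r : K) := by
  obtain ⟨p, hdeg, hp⟩ := exists_polynomial_apply_add_nsmul_eq (hf 1) 0
  refine ⟨p, hdeg, fun r => ?_⟩
  obtain ⟨q, -, hq⟩ := exists_polynomial_apply_add_nsmul_eq (hf (r.den : ℚ)⁻¹) r
  have hden : (r.den : ℚ) ≠ 0 := Nat.cast_ne_zero.2 r.den_ne_zero
  obtain ⟨m, hm⟩ : ∃ m : ℕ, r.num ≤ m := ⟨r.num.toNat, r.num.self_le_toNat⟩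
  -- Beyond `m`, the progressions `ℕ` and `r + ℕ / r.den` have infinitely many common terms.
  have agree (i : ℕ) : p.eval ((i + m : ℕ) : K) =
      (q.comp (C (r.den : K) * X - C (r.num : K))).eval ((i + m : ℕ) : K) := by
    obtain ⟨n, hn⟩ : ∃ n : ℕ, (r.den : ℤ) * (i + m : ℕ) - r.num = n := by
      refine Int.eq_ofNat_of_zero_le ?_
      have := r.den_pos
      push_cast
      nlinarith
    have grid : r + n • (r.den : ℚ)⁻¹ = 0 + (i + m) • (1 : ℚ) := by
      have hnQ : (r.den : ℚ) * (i + m : ℕ) - r.num = n := mod_cast hn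
      rw [nsmul_eq_mul, ← hnQ, nsmul_one, zero_add]
      nth_rewrite 1 [← Rat.num_div_den r]
      field
    have hnK : (r.den : K) * (i + m : ℕ) - r.num = n := mod_cast congrArg (Int.cast (R := K)) hn
    rw [← hp, ← grid, hq, ← hnK]
    simp
  have key : p = q.comp (C (r.den : K) * X - C (r.num : K)) := by
    refine eq_of_infinite_eval_eq _ _ ((Set.infinite_range_of_injective
      (Nat.cast_injective.comp (add_left_injective m))).mono ?_)
    rintro _ ⟨i, rfl⟩
    exact agree i
  have hcenter : (r.den * r - r.num : K) = 0 := by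
    rw [sub_eq_zero]
    exact_mod_cast Rat.den_mul_eq_num r
  rw [key, eval_comp]
  simpa [hcenter] using hq 0

theorem exists_polynomial_apply_add_smul_eq {𝕜 E : Type*} [RCLike 𝕜] [AddCommGroup E] [Module ℝ E]
    [TopologicalSpace E] [ContinuousAdd E] [ContinuousSMul ℝ E] {f : E → 𝕜} (hf : Continuous f)
    (hΔ : ∀ h, (Δ_[h])^[N] f = 0) (x v : E) :
    ∃ p : 𝕜[X], p.degree < N ∧ ∀ t : ℝ, f (x + t • v) = p.eval (algebraMap ℝ 𝕜 t) := by
  let φ : ℚ →+ E := (LinearMap.toSpanSingleton ℝ E v).toAddMonoidHom.comp (Rat.castHom ℝ)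
  obtain ⟨p, hdeg, hp⟩ := exists_polynomial_apply_ratCast_eq (f := fun r => f (x + φ r))
    fun h => by rw [fwdDiff_iter_comp_add_map, hΔ]; rfl
  refine ⟨p, hdeg, congrFun (Rat.denseRange_cast.equalizer (by fun_prop) ?_ ?_)⟩
  · exact p.continuous.comp (algebraMapCLM ℝ 𝕜).continuous
  · ext r
    simpa [φ] using hp r

theorem exists_mvPolynomial_of_forall_update {ι k K : Type*} [Finite ι] [DecidableEq ι]
    [Field k] [Infinite k] [Field K] [Algebra k K] {f : (ι → k) → K}
    (hf : ∀ x i, ∃ p : K[X], p.degree < N ∧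
      ∀ t, f (Function.update x i t) = p.eval (algebraMap k K t)) :
    ∃ P : MvPolynomial ι K, ∀ x, f x = MvPolynomial.eval (fun i => algebraMap k K (x i)) P := by
  classical
  cases nonempty_fintype ι
  obtain ⟨nodes, hcard⟩ := Infinite.exists_subset_card_eq k N
  let ℓ (j : k) : K[X] := Lagrange.basis nodes (algebraMap k K) j
  have interpolate (x : ι → k) (i : ι) (t : k) : f (Function.update x i t) =
      ∑ j ∈ nodes, f (Function.update x i j) * (ℓ j).eval (algebraMap k K t) := by
    obtain ⟨p, hdeg, hp⟩ := hf x i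
    rw [hp, Lagrange.eq_interpolate (f := p) (algebraMap k K).injective.injOn (hcard ▸ hdeg),
      Lagrange.interpolate_apply, eval_finsetSum]
    simp only [eval_mul, eval_C, ← hp, ℓ]
  suffices main : ∀ s : Finset ι, ∀ a, ∃ P : MvPolynomial ι K, ∀ x,
      f (s.piecewise x a) = MvPolynomial.eval (fun i => algebraMap k K (x i)) P by
    simpa using main Finset.univ 0
  intro s
  induction s using Finset.induction_on with
  | empty => exact fun a => ⟨MvPolynomial.C (f a), by simp⟩
  | insert i s hi ih =>
    intro a
    choose P hP using fun j => ih (Function.update a i j)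
    refine ⟨∑ j ∈ nodes, P j * aeval (MvPolynomial.X i) (ℓ j), fun x => ?_⟩
    have eval_ℓ (j : k) : MvPolynomial.eval (fun i => algebraMap k K (x i))
        (aeval (MvPolynomial.X i) (ℓ j)) = (ℓ j).eval (algebraMap k K (x i)) := by
      rw [← MvPolynomial.coe_aeval_eq_eval, RingHom.coe_coe, ← aeval_algHom_apply,
        MvPolynomial.aeval_X, coe_aeval_eq_eval]
    rw [Finset.piecewise_insert, interpolate, map_sum]
    refine Finset.sum_congr rfl fun j _ => ?_
    rw [map_mul, eval_ℓ, ← hP, Finset.update_piecewise_of_notMem s x a hi]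

theorem exists_mvPolynomial_of_fwdDiff_iter_eq_zero {ι 𝕜 E : Type*} [Finite ι] [RCLike 𝕜]
    [AddCommGroup E] [Module ℝ E] [TopologicalSpace E] [ContinuousAdd E] [ContinuousSMul ℝ E]
    (b : Module.Basis ι ℝ E) {f : E → 𝕜} (hf : Continuous f) (hΔ : ∀ h, (Δ_[h])^[N] f = 0) :
    ∃ P : MvPolynomial ι 𝕜, ∀ x,
      f x = MvPolynomial.eval (fun i => algebraMap ℝ 𝕜 (b.repr x i)) P := by
  classical
  obtain ⟨P, hP⟩ := exists_mvPolynomial_of_forall_update (f := f ∘ b.equivFun.symm)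
    fun c i => by
      obtain ⟨p, hdeg, hp⟩ := exists_polynomial_apply_add_smul_eq hf hΔ
        (b.equivFun.symm (Function.update c i 0)) (b i)
      refine ⟨p, hdeg, fun t => ?_⟩
      have hline : Function.update c i t = Function.update c i 0 + t • Pi.single i 1 := by
        ext j
        rcases eq_or_ne j i with rfl | hj <;> simp [*]
      have hsingle : b.equivFun.symm (Pi.single i 1) = b i := by
        rw [b.equivFun.symm_apply_eq, b.equivFun_apply, b.repr_self, Finsupp.single_eq_pi_single]
      rw [← hp, Function.comp_apply, hline, map_add, map_smul, hsingle]
  refine ⟨P, fun x => ?_⟩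
  simpa only [Function.comp_apply, b.equivFun.symm_apply_apply] using! hP (b.equivFun x)

end FwdDiff

section Invariant

variable {E K : Type*}

/-- The translation operator `f ↦ f (· + u)` on functions `E → K`. -/
def translation (K : Type*) [Semiring K] [Add E] (u : E) : Module.End K (E → K) :=
  LinearMap.funLeft K K (· + u)

theorem translation_commute [Semiring K] [AddCommSemigroup E] (u v : E) :
    Commute (translation K u) (translation K v) :=
  LinearMap.ext fun f => funext fun x => congrArg f (add_right_comm x u v)

/-- A space of functions is isometry invariant if it is stable under precomposition with
surjective isometries. -/
def IsIsometryInvariant [PseudoEMetricSpace E] [Semiring K] (V : Submodule K (E → K)) : Prop :=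
  ∀ e : E ≃ᵢ E, ∀ g ∈ V, g ∘ e ∈ V

/-- A weight of the translations on `V`: a function `χ` for which some nonzero `g ∈ V` is a common
eigenvector of all translations, with `χ u` the eigenvalue of the translation by `u`. -/
def IsTranslationWeight [Semiring K] [Add E] (V : Submodule K (E → K)) (χ : E → K) : Prop :=
  ∃ g ∈ V, g ≠ 0 ∧ ∀ u, translation K u g = χ u • g

theorem IsIsometryInvariant.mapsTo_translation [SeminormedAddCommGroup E] [Semiring K]
    {V : Submodule K (E → K)} (hV : IsIsometryInvariant V) (u : E) :
    Set.MapsTo (translation K u) V V :=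
  fun g hg => hV (IsometryEquiv.addRight u) g hg

namespace IsTranslationWeight

theorem map_add [Field K] [AddSemigroup E] {V : Submodule K (E → K)} {χ : E → K}
    (hχ : IsTranslationWeight V χ) (u v : E) : χ (u + v) = χ u * χ v := by
  obtain ⟨g, -, hg0, hg⟩ := hχ
  have hχg (w x : E) : g (x + w) = χ w * g x := congrFun (hg w) x
  obtain ⟨x, hx⟩ := Function.ne_iff.1 hg0
  refine mul_right_cancel₀ hx ?_
  rw [← hχg, ← add_assoc, hχg, hχg, mul_left_comm, mul_assoc]

theorem map_zero [Field K] [AddMonoid E] {V : Submodule K (E → K)} {χ : E → K}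
    (hχ : IsTranslationWeight V χ) : χ 0 = 1 := by
  obtain ⟨g, -, hg0, hg⟩ := hχ
  refine smul_left_injective K hg0 ((hg 0).symm.trans ?_)
  simp [translation, funext_iff]

theorem continuous [Field K] [TopologicalSpace K] [ContinuousMul K] [AddMonoid E]
    [TopologicalSpace E] [ContinuousAdd E] {V : Submodule K (E → K)} {χ : E → K}
    (hcont : ∀ g ∈ V, Continuous g) (hχ : IsTranslationWeight V χ) : Continuous χ := by
  obtain ⟨g, hgV, hg0, hg⟩ := hχ
  obtain ⟨x, hx⟩ := Function.ne_iff.1 hg0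
  have hχ_eq : χ = fun u => g (x + u) * (g x)⁻¹ :=
    funext fun u => (eq_mul_inv_iff_mul_eq₀ hx).2 (congrFun (hg u) x).symm
  rw [hχ_eq]
  exact ((hcont g hgV).comp (continuous_const_add x)).mul_const _

theorem comp_linearIsometryEquiv [SeminormedAddCommGroup E] [NormedSpace ℝ E] [Semiring K]
    {V : Submodule K (E → K)} {χ : E → K} (hV : IsIsometryInvariant V)
    (hχ : IsTranslationWeight V χ) (A : E ≃ₗᵢ[ℝ] E) : IsTranslationWeight V (χ ∘ A) := by
  obtain ⟨g, hgV, hg0, hg⟩ := hχ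
  refine ⟨g ∘ A, hV A.toIsometryEquiv g hgV, fun h0 => hg0 ?_, fun u => funext fun x => ?_⟩
  · exact A.surjective.injective_comp_right h0
  · exact (congrArg g (_root_.map_add A x u)).trans (congrFun (hg (A u)) (A x))

theorem finite_setOf_apply [SeminormedAddCommGroup E] [Field K] {V : Submodule K (E → K)}
    [FiniteDimensional K V] (hV : IsIsometryInvariant V) (u : E) :
    ((fun χ : E → K => χ u) '' {χ | IsTranslationWeight V χ}).Finite := by
  refine (Module.End.finite_hasEigenvalue
    ((translation K u).restrict (hV.mapsTo_translation u))).subset ?_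
  rintro _ ⟨χ, ⟨g, hgV, hg0, hg⟩, rfl⟩
  exact Module.End.hasEigenvalue_of_hasEigenvector (x := ⟨g, hgV⟩)
    ⟨Module.End.mem_eigenspace_iff.2 (Subtype.ext (hg u)), fun h0 => hg0 (congrArg Subtype.val h0)⟩

end IsTranslationWeight

theorem IsIsometryInvariant.exists_isTranslationWeight [SeminormedAddCommGroup E] [Field K]
    [IsAlgClosed K] {V : Submodule K (E → K)} [FiniteDimensional K V] (hV : IsIsometryInvariant V)
    {h : E} {μ : K}
    (hμ : Module.End.HasEigenvalue ((translation K h).restrict (hV.mapsTo_translation h)) μ) :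
    ∃ χ, IsTranslationWeight V χ ∧ χ h = μ := by
  have : FiniteDimensional K (V ⊓ (translation K h).eigenspace μ : Submodule K (E → K)) :=
    Submodule.finiteDimensional_of_le inf_le_left
  obtain ⟨g, ⟨hgV, hgμ⟩, hg0, χ, hχ⟩ := exists_common_eigenvector translation_commute
    (inf_eigenspace_ne_bot_of_hasEigenvalue_restrict hμ)
    fun u => (hV.mapsTo_translation u).inter_inter
      (Module.End.mapsTo_genEigenspace_of_comm (translation_commute h u) μ 1)
  refine ⟨χ, ⟨g, hgV, hg0, hχ⟩, smul_left_injective K hg0 ?_⟩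
  exact (hχ h).symm.trans (Module.End.mem_eigenspace_iff.1 hgμ)

section Sphere

variable [NormedAddCommGroup E] [InnerProductSpace ℝ E] [Field K] [TopologicalSpace K]
  [ContinuousMul K] [T1Space K] {V : Submodule K (E → K)} [FiniteDimensional K V]

theorem IsTranslationWeight.apply_eq_of_norm_eq (hE : 1 < Module.rank ℝ E)
    (hV : IsIsometryInvariant V) (hcont : ∀ g ∈ V, Continuous g) {χ : E → K}
    (hχ : IsTranslationWeight V χ) {u v : E} (huv : ‖u‖ = ‖v‖) : χ u = χ v := by
  by_contra hne
  have connected : IsPreconnected (χ '' Metric.sphere 0 ‖u‖) :=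
    (isPreconnected_sphere hE 0 ‖u‖).image χ (hχ.continuous hcont).continuousOn
  have nontrivial : (χ '' Metric.sphere 0 ‖u‖).Nontrivial :=
    ⟨χ u, ⟨u, by simp, rfl⟩, χ v, ⟨v, by simp [huv], rfl⟩, hne⟩
  refine connected.infinite_of_nontrivial nontrivial
    ((IsTranslationWeight.finite_setOf_apply hV u).subset ?_)
  rintro _ ⟨w, hw, rfl⟩
  have huw : ‖u‖ = ‖w‖ := (mem_sphere_zero_iff_norm.1 hw).symm
  exact ⟨_, hχ.comp_linearIsometryEquiv hV (Submodule.reflection (ℝ ∙ (u - w))ᗮ),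
    congrArg χ (Submodule.reflection_sub huw)⟩

theorem IsTranslationWeight.apply_eq_one (hE : 1 < Module.rank ℝ E)
    (hV : IsIsometryInvariant V) (hcont : ∀ g ∈ V, Continuous g) {χ : E → K}
    (hχ : IsTranslationWeight V χ) (u : E) : χ u = 1 := by
  have hneg : χ ((2⁻¹ : ℝ) • u) = χ (-((2⁻¹ : ℝ) • u)) :=
    hχ.apply_eq_of_norm_eq hE hV hcont (norm_neg _).symm
  calc χ u = χ ((2⁻¹ : ℝ) • u + (2⁻¹ : ℝ) • u) := by rw [← add_smul]; norm_num
    _ = χ ((2⁻¹ : ℝ) • u + -((2⁻¹ : ℝ) • u)) := by rw [hχ.map_add, hχ.map_add, ← hneg]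
    _ = 1 := by rw [add_neg_cancel, hχ.map_zero]

theorem IsIsometryInvariant.fwdDiff_iter_finrank_eq_zero [IsAlgClosed K]
    (hE : 1 < Module.rank ℝ E) (hV : IsIsometryInvariant V) (hcont : ∀ g ∈ V, Continuous g)
    {f : E → K} (hf : f ∈ V) (h : E) : (Δ_[h])^[finrank K V] f = 0 := by
  let T : Module.End K V := (translation K h).restrict (hV.mapsTo_translation h)
  have unipotent : (T - (1 : K) • 1) ^ finrank K V = 0 := by
    refine sub_smul_pow_finrank_eq_zero_of_forall_hasEigenvalue fun μ hμ => ?_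
    obtain ⟨χ, hχ, rfl⟩ := hV.exists_isTranslationWeight hμ
    exact hχ.apply_eq_one hE hV hcont h
  have semiconj : Function.Semiconj V.subtype ⇑(T - (1 : K) • 1) (Δ_[h]) := fun g => by
    rw [one_smul]; rfl
  calc (Δ_[h])^[finrank K V] f = V.subtype (((T - (1 : K) • 1) ^ finrank K V) ⟨f, hf⟩) := by
        rw [Module.End.pow_apply, (semiconj.iterate_right _).eq]; rfl
    _ = 0 := by rw [unipotent, LinearMap.zero_apply, _root_.map_zero]

end Sphere

end Invariant

section IsometrySpan

variable {E K : Type*} [PseudoEMetricSpace E] [Semiring K]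

/-- The span `R_f` of the compositions of `f` with the surjective isometries of `E`. -/
def isometrySpan (f : E → K) : Submodule K (E → K) :=
  Submodule.span K (Set.range fun e : E ≃ᵢ E => f ∘ e)

theorem self_mem_isometrySpan (f : E → K) : f ∈ isometrySpan f :=
  Submodule.subset_span ⟨IsometryEquiv.refl E, rfl⟩

theorem isIsometryInvariant_isometrySpan (f : E → K) : IsIsometryInvariant (isometrySpan f) := by
  intro e
  change isometrySpan f ≤ (isometrySpan f).comap (LinearMap.funLeft K K e)
  refine Submodule.span_le.2 ?_
  rintro _ ⟨e', rfl⟩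
  exact Submodule.subset_span ⟨e.trans e', rfl⟩

theorem continuous_of_mem_isometrySpan [TopologicalSpace K] [ContinuousAdd K] [ContinuousMul K]
    {f g : E → K} (hf : Continuous f) (hg : g ∈ isometrySpan f) : Continuous g := by
  induction hg using Submodule.span_induction with
  | mem _ hmem =>
    obtain ⟨e, rfl⟩ := hmem
    exact hf.comp e.continuous
  | zero => exact continuous_const
  | add _ _ _ _ h₁ h₂ => exact h₁.add h₂
  | smul c _ _ h => exact h.const_smul c

end IsometrySpan

section AffineFunctions

variable {k A E E' : Type*} [CommRing k] [CommRing A] [Algebra k A]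
  [AddCommGroup E] [Module k E] [AddCommGroup E'] [Module k E']

/-- The space of `A`-valued functions that are affine over `k`. Its `n`-th power in the algebra
`E → A` serves as the space of polynomial functions of degree at most `n`. -/
def affineFunctions (k A E : Type*) [CommRing k] [CommRing A] [Algebra k A]
    [AddCommGroup E] [Module k E] : Submodule A (E → A) :=
  ({ toFun := fun φ => φ
     map_add' := AffineMap.coe_add
     map_smul' := fun _ _ => rfl } : (E →ᵃ[k] A) →ₗ[A] E → A).range

theorem affineFunctions_fg [Module.Finite k E] [Module.Free k E] : (affineFunctions k A E).FG :=
  Module.Finite.iff_fg.1 (Module.Finite.range _)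

theorem affineFunctions_pow_mono : Monotone (affineFunctions k A E ^ ·) :=
  fun _ _ => pow_le_pow_right' (Submodule.one_le.2 ⟨AffineMap.const k E 1, rfl⟩)

theorem comp_mem_affineFunctions_pow {g : E' → A} {n : ℕ} (hg : g ∈ affineFunctions k A E' ^ n)
    (ψ : E →ᵃ[k] E') : g ∘ ψ ∈ affineFunctions k A E ^ n := by
  let Ψ : (E' → A) →ₐ[A] (E → A) := AlgHom.pi fun x => Pi.evalAlgHom A (fun _ => A) (ψ x)
  have map_le : (affineFunctions k A E').map Ψ.toLinearMap ≤ affineFunctions k A E := by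
    rintro _ ⟨_, ⟨φ, rfl⟩, rfl⟩
    exact ⟨φ.comp ψ, rfl⟩
  have hΨg : Ψ g ∈ (affineFunctions k A E').map Ψ.toLinearMap ^ n :=
    Submodule.map_pow (affineFunctions k A E') Ψ n ▸ Submodule.mem_map_of_mem hg
  exact pow_le_pow_left' map_le n hΨg

theorem exists_eval_mem_affineFunctions_pow {ι : Type*} (φ : ι → E →ᵃ[k] A)
    (p : MvPolynomial ι A) :
    ∃ n, (fun x => MvPolynomial.eval (fun i => φ i x) p) ∈ affineFunctions k A E ^ n := by
  induction p using MvPolynomial.induction_on with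
  | C a =>
    refine ⟨1, ?_⟩
    rw [pow_one]
    exact ⟨AffineMap.const k E a, funext fun x => (MvPolynomial.eval_C a).symm⟩
  | add p q hp hq =>
    obtain ⟨m, hm⟩ := hp
    obtain ⟨n, hn⟩ := hq
    refine ⟨max m n, ?_⟩
    simp only [map_add]
    exact add_mem (affineFunctions_pow_mono (le_max_left m n) hm)
      (affineFunctions_pow_mono (le_max_right m n) hn)
  | mul_X p i hp =>
    obtain ⟨n, hn⟩ := hp
    refine ⟨n + 1, ?_⟩
    simp only [map_mul, MvPolynomial.eval_X, pow_succ]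
    exact Submodule.mul_mem_mul hn ⟨φ i, rfl⟩

theorem finiteDimensional_isometrySpan {E K : Type*} [NormedAddCommGroup E] [NormedSpace ℝ E]
    [FiniteDimensional ℝ E] [Field K] [Algebra ℝ K] {f : E → K} {n : ℕ}
    (hf : f ∈ affineFunctions ℝ K E ^ n) : FiniteDimensional K (isometrySpan f) := by
  have : FiniteDimensional K ↥(affineFunctions ℝ K E ^ n) :=
    Module.Finite.iff_fg.2 (affineFunctions_fg.pow n)
  refine Submodule.finiteDimensional_of_le (Submodule.span_le.2 ?_ : _ ≤ affineFunctions ℝ K E ^ n)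
  rintro _ ⟨e, rfl⟩
  exact comp_mem_affineFunctions_pow hf (e.toRealAffineIsometryEquiv : E →ᵃ[ℝ] E)

end AffineFunctions

section Main

variable {E : Type*}

theorem isometrySpan_eq_span_setOf [NormedAddCommGroup E] {K : Type*} [Semiring K] (f : E → K) :
    isometrySpan f = Submodule.span K {g : E → K | ∃ L : E → E, Function.Surjective L ∧
      (∀ x y, ‖L x - L y‖ = ‖x - y‖) ∧ g = fun x => f (L x)} := by
  refine congrArg (Submodule.span K) (Set.ext fun g => ⟨?_, ?_⟩)
  · rintro ⟨e, rfl⟩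
    exact ⟨e, e.surjective, fun x y => by simp only [← dist_eq_norm, e.dist_eq], rfl⟩
  · rintro ⟨L, hsurj, hnorm, rfl⟩
    have isometry : Isometry L :=
      Isometry.of_dist_eq fun x y => by simpa only [dist_eq_norm] using hnorm x y
    exact ⟨⟨Equiv.ofBijective L ⟨isometry.injective, hsurj⟩, isometry⟩, rfl⟩

variable [NormedAddCommGroup E] [InnerProductSpace ℝ E] {ι : Type*} [Finite ι]

theorem loewner_characterization_of_polynomials_general (b : Module.Basis ι ℝ E)
    (hE : 1 < finrank ℝ E) {f : E → ℂ} (hf : Continuous f) :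
    (∃ p : MvPolynomial ι ℂ, ∀ x, f x = MvPolynomial.eval (fun i => (b.repr x i : ℂ)) p) ↔
      FiniteDimensional ℂ (isometrySpan f) := by
  have : FiniteDimensional ℝ E := b.finiteDimensional_of_finite
  constructor
  · rintro ⟨p, hp⟩
    obtain ⟨n, hn⟩ := exists_eval_mem_affineFunctions_pow
      (fun i => ((Algebra.linearMap ℝ ℂ).comp (b.coord i)).toAffineMap) p
    exact finiteDimensional_isometrySpan (f := f) (funext hp ▸ hn)
  · intro _
    exact exists_mvPolynomial_of_fwdDiff_iter_eq_zero b hf <|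
      (isIsometryInvariant_isometrySpan f).fwdDiff_iter_finrank_eq_zero
        (Module.lt_rank_of_lt_finrank hE) (fun _ => continuous_of_mem_isometrySpan hf)
        (self_mem_isometrySpan f)

end Main

/-- **Loewner's theorem.** For `d ≥ 2`, a continuous `f : ℝ^d → ℂ` is an ordinary
polynomial iff the span of its compositions with surjective isometries of `ℝ^d`
is finite dimensional. -/
theorem loewner_characterization_of_polynomials
    (d : ℕ) (hd : 2 ≤ d)
    (f : EuclideanSpace ℝ (Fin d) → ℂ) (hf : Continuous f) :
    (∃ p : MvPolynomial (Fin d) ℂ,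
        ∀ x : EuclideanSpace ℝ (Fin d),
          f x = MvPolynomial.eval (fun i => (x i : ℂ)) p) ↔
      FiniteDimensional ℂ
        (Submodule.span ℂ
          {g : EuclideanSpace ℝ (Fin d) → ℂ |
            ∃ L : EuclideanSpace ℝ (Fin d) → EuclideanSpace ℝ (Fin d),
              Function.Surjective L ∧
              (∀ x y, ‖L x - L y‖ = ‖x - y‖) ∧
              g = fun x => f (L x)}) := by
  rw [← isometrySpan_eq_span_setOf]
  exact loewner_characterization_of_polynomials_general
    (EuclideanSpace.basisFun (Fin d) ℝ).toBasis (by rwa [finrank_euclideanSpace_fin]) hf
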